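/- Let (A, 𝔪) be a finite local Gorenstein k-algebra of socle degree j. Then: (a) Q_{m,0} = 0 for all m, and Q_{m,n} = 0 whenever m + n > j + 1; (b) the local Hilbert function satisfies h_A(t) = 0 for t > j; and (c) for 0 ≤ t ≤ j, h_A(t) = dim_k 𝔪^t/𝔪^{t+1} = Σ_{i=0}^{j−t} Δ_i(t) = Σ_{n=0}^{j+1} dim_k Q_{t,n}. -/

import Mathlib

/-- `dim_k P/(P ∩ Q)`, the `k`-dimension of the image of the submodule `P` in `A/Q`. -/
noncomputable def subquotDim (k : Type*) {A : Type*} [Field k] [CommRing A] [Algebra k A]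
    (P Q : Submodule A A) : ℕ :=
  Module.finrank k (↥(P.restrictScalars k) ⧸
    (Submodule.comap (P.restrictScalars k).subtype (Q.restrictScalars k)))

/-- Iarrobino's `A_{m,n} = J^m ∩ (0 : J^n)`, with the convention `J^i = A` for `i ≤ 0`. -/
noncomputable def iaA {A : Type*} [CommRing A] (J : Ideal A) (m : ℕ) (n : ℤ) : Ideal A :=
  J ^ m ⊓ Submodule.torsionBySet A A ((J ^ n.toNat : Ideal A) : Set A)

/-- `dim_k Q_{m,n}` where `Q_{m,n} = A_{m,n}/(A_{m+1,n} + A_{m,n-1})`. -/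
noncomputable def iaQdim (k : Type*) {A : Type*} [Field k] [CommRing A] [Algebra k A]
    (J : Ideal A) (m : ℕ) (n : ℤ) : ℕ :=
  subquotDim k (iaA J m n) (iaA J (m + 1) n ⊔ iaA J m (n - 1))

/-- The Hilbert function decomposition `Δ_s(t) = dim_k Q_{t, j+1-(s+t)}` for `0 ≤ s ≤ j`,
`0 ≤ t ≤ j - s`, and `Δ_s(t) = 0` otherwise. -/
noncomputable def iaDelta (k : Type*) {A : Type*} [Field k] [CommRing A] [Algebra k A]
    (J : Ideal A) (j s t : ℕ) : ℕ :=
  if s ≤ j ∧ s + t ≤ j then iaQdim k J t ((j : ℤ) + 1 - (s + t)) else 0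

/-- The local Hilbert function `h(t) = dim_k J^t/J^(t+1)`. -/
noncomputable def hilbFn (k : Type*) {A : Type*} [Field k] [CommRing A] [Algebra k A]
    (J : Ideal A) (t : ℕ) : ℕ :=
  subquotDim k (J ^ t) (J ^ (t + 1))

/-!
Write `A_{m,n} = J^m ∩ (0 : J^n)`. Since `A_{m+1,n} ∩ A_{m,n-1} = A_{m+1,n-1}`, the second
isomorphism theorem makes `A_{m,n-1}/A_{m+1,n-1}` a subspace of `A_{m,n}/A_{m+1,n}` with quotient
`Q_{m,n}`. So the spaces `A_{m,n}/A_{m+1,n}` filter `J^m/J^(m+1)` with graded pieces `Q_{m,n}`: the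
filtration starts at `0` for `n = 0`, and is exhausted once `m + n` reaches the nilpotency
exponent of `J`. Summing the dimensions of the pieces gives the Hilbert function.
-/

section subquotDim

variable {k A : Type*} [Field k] [CommRing A] [Algebra k A] {P Q R : Submodule A A}

lemma subquotDim_eq_zero (h : P ≤ Q) : subquotDim k P Q = 0 := by
  have hcomap : (Q.restrictScalars k).comap (P.restrictScalars k).subtype = ⊤ :=
    Submodule.comap_subtype_eq_top.mpr h
  rw [subquotDim, hcomap]
  exact Module.finrank_zero_of_subsingleton

lemma subquotDim_sup_left (P Q : Submodule A A) :
    subquotDim k (P ⊔ Q) Q = subquotDim k P Q := by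
  have e := LinearMap.quotientInfEquivSupQuotient (P.restrictScalars k) (Q.restrictScalars k)
  rw [Submodule.comap_subtype_self, top_inf_eq, ← Submodule.restrictScalars_sup] at e
  exact e.finrank_eq.symm

lemma subquotDim_inf_right (P Q : Submodule A A) :
    subquotDim k P (P ⊓ Q) = subquotDim k P Q := by
  rw [subquotDim, subquotDim, Submodule.restrictScalars_inf, Submodule.comap_inf,
    Submodule.comap_subtype_self, top_inf_eq]

variable [FiniteDimensional k A]

lemma subquotDim_add_finrank (h : Q ≤ P) :
    subquotDim k P Q + Module.finrank k (Q.restrictScalars k) =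
      Module.finrank k (P.restrictScalars k) := by
  have h' : Q.restrictScalars k ≤ P.restrictScalars k := h
  rw [← (Submodule.comapSubtypeEquivOfLe h').finrank_eq]
  exact Submodule.finrank_quotient_add_finrank _

lemma subquotDim_add_subquotDim (hQP : Q ≤ P) (hRQ : R ≤ Q) :
    subquotDim k P Q + subquotDim k Q R = subquotDim k P R := by
  have hPQ := subquotDim_add_finrank (k := k) hQP
  have hQR := subquotDim_add_finrank (k := k) hRQ
  have hPR := subquotDim_add_finrank (k := k) (hRQ.trans hQP)
  omega

end subquotDim

section iaA

variable {A : Type*} [CommRing A] (J : Ideal A) {m m' N : ℕ} {n n' : ℤ}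

lemma iaA_antitone_left (n : ℤ) : Antitone fun m => iaA J m n := fun _ _ h =>
  inf_le_inf_right _ (Ideal.pow_le_pow_right h)

lemma iaA_monotone_right (m : ℕ) : Monotone (iaA J m) := fun _ _ h =>
  inf_le_inf_left _ (Submodule.torsionBySet_le_torsionBySet_of_subset
    (Ideal.pow_le_pow_right (Int.toNat_le_toNat h)))

lemma iaA_inf_iaA (hm : m ≤ m') (hn : n ≤ n') : iaA J m n ⊓ iaA J m' n' = iaA J m' n :=
  le_antisymm (le_inf (inf_le_right.trans inf_le_left) (inf_le_left.trans inf_le_right))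
    (le_inf (iaA_antitone_left J n hm) (iaA_monotone_right J m' hn))

lemma iaA_of_nonpos (m : ℕ) (hn : n ≤ 0) : iaA J m n = ⊥ := by
  simp [iaA, Int.toNat_of_nonpos hn]

variable {J}

lemma iaA_eq_pow (hJ : J ^ N = ⊥) (h : (N : ℤ) ≤ m + n) : iaA J m n = J ^ m := by
  refine inf_eq_left.mpr fun x hx => (Submodule.mem_torsionBySet_iff _ _).mpr ?_
  rintro ⟨a, ha⟩
  have hax : a * x ∈ J ^ (n.toNat + m) := pow_add J n.toNat m ▸ Ideal.mul_mem_mul ha hx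
  have hax' : a * x ∈ J ^ N := Ideal.pow_le_pow_right (by omega) hax
  simpa only [hJ, Ideal.mem_bot, smul_eq_mul] using hax'

end iaA

section HilbertFunction

variable {k A : Type*} [Field k] [CommRing A] [Algebra k A] {J : Ideal A} {N m t : ℕ} {n : ℤ}

lemma iaQdim_of_nonpos (J : Ideal A) (m : ℕ) (hn : n ≤ 0) : iaQdim k J m n = 0 :=
  subquotDim_eq_zero (iaA_of_nonpos J m hn ▸ bot_le)

lemma iaQdim_eq_zero (hJ : J ^ N = ⊥) (h : (N : ℤ) < m + n) : iaQdim k J m n = 0 := by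
  refine subquotDim_eq_zero (le_sup_of_le_right ?_)
  rw [iaA_eq_pow hJ h.le, iaA_eq_pow hJ (by omega)]

lemma hilbFn_eq_zero (hJ : J ^ N = ⊥) (h : N ≤ t) : hilbFn k J t = 0 :=
  subquotDim_eq_zero (((Ideal.pow_le_pow_right h).trans hJ.le).trans bot_le)

variable [FiniteDimensional k A]

lemma subquotDim_iaA_succ_left (J : Ideal A) (m : ℕ) (n : ℤ) :
    subquotDim k (iaA J m n) (iaA J (m + 1) n) =
      subquotDim k (iaA J m (n - 1)) (iaA J (m + 1) (n - 1)) + iaQdim k J m n := by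
  have hleft : iaA J (m + 1) n ≤ iaA J m n := iaA_antitone_left J n m.le_succ
  have hright : iaA J m (n - 1) ≤ iaA J m n := iaA_monotone_right J m (by omega)
  have hsecond : subquotDim k (iaA J (m + 1) n ⊔ iaA J m (n - 1)) (iaA J (m + 1) n) =
      subquotDim k (iaA J m (n - 1)) (iaA J (m + 1) (n - 1)) := by
    rw [sup_comm, subquotDim_sup_left, ← subquotDim_inf_right,
      iaA_inf_iaA J m.le_succ (by omega)]
  rw [← subquotDim_add_subquotDim (sup_le hleft hright) le_sup_left, hsecond, add_comm, iaQdim]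

lemma sum_iaQdim (J : Ideal A) (m M : ℕ) :
    ∑ n ∈ Finset.range (M + 1), iaQdim k J m n =
      subquotDim k (iaA J m M) (iaA J (m + 1) M) := by
  induction M with
  | zero =>
    rw [Finset.sum_range_one, Nat.cast_zero, iaQdim_of_nonpos J m le_rfl,
      subquotDim_eq_zero (iaA_of_nonpos J m le_rfl ▸ bot_le)]
  | succ M ih =>
    rw [Finset.sum_range_succ, ih, subquotDim_iaA_succ_left J m (M + 1 : ℕ), Nat.cast_succ,
      add_sub_cancel_right]

lemma hilbFn_eq_sum_iaQdim {M : ℕ} (hJ : J ^ N = ⊥) (h : N ≤ t + M) :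
    hilbFn k J t = ∑ n ∈ Finset.range (M + 1), iaQdim k J t n := by
  rw [sum_iaQdim, iaA_eq_pow hJ (by omega), iaA_eq_pow hJ (by omega), hilbFn]

lemma hilbFn_eq_sum_iaDelta {j : ℕ} (hJ : J ^ (j + 1) = ⊥) (ht : t ≤ j) :
    hilbFn k J t = ∑ i ∈ Finset.range (j - t + 1), iaDelta k J j i t := by
  -- `Δ_i(t) = dim Q_{t,j+1-t-i}`, so the two sums run through the same terms in opposite order.
  rw [hilbFn_eq_sum_iaQdim (M := j - t + 1) hJ (by omega), Finset.sum_range_succ', Nat.cast_zero,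
    iaQdim_of_nonpos J t le_rfl, add_zero, ← Finset.sum_range_reflect]
  refine Finset.sum_congr rfl fun i hi => ?_
  rw [Finset.mem_range] at hi
  have hindex : ((j - t + 1 - 1 - i + 1 : ℕ) : ℤ) = (j : ℤ) + 1 - (i + t) := by omega
  rw [iaDelta, if_pos (by omega), hindex]

theorem deformations_stmt13_general {j : ℕ} (hJ : J ^ (j + 1) = ⊥) :
    (∀ m : ℕ, iaQdim k J m 0 = 0) ∧
    (∀ m n : ℕ, (j : ℤ) + 1 < (m : ℤ) + n → iaQdim k J m (n : ℤ) = 0) ∧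
    (∀ t : ℕ, j < t → hilbFn k J t = 0) ∧
    (∀ t : ℕ, t ≤ j →
      hilbFn k J t = ∑ i ∈ Finset.range (j - t + 1), iaDelta k J j i t) ∧
    (∀ t : ℕ, hilbFn k J t = ∑ n ∈ Finset.range (j + 2), iaQdim k J t (n : ℤ)) :=
  ⟨fun m => iaQdim_of_nonpos J m le_rfl,
    fun _ _ h => iaQdim_eq_zero hJ (by omega),
    fun _ ht => hilbFn_eq_zero hJ ht,
    fun _ ht => hilbFn_eq_sum_iaDelta hJ ht,
    fun _ => hilbFn_eq_sum_iaQdim hJ (by omega)⟩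

end HilbertFunction

/-- Let `(A, 𝔪)` be a finite local Gorenstein `k`-algebra of socle
degree `j`. Then: (a) `Q_{m,0} = 0` for all `m`, and `Q_{m,n} = 0` whenever
`m + n > j + 1`; (b) the local Hilbert function satisfies `h_A(t) = 0` for `t > j`; and
(c) for `0 ≤ t ≤ j`,
`h_A(t) = dim_k 𝔪^t/𝔪^(t+1) = Σ_{i=0}^{j-t} Δ_i(t) = Σ_{n=0}^{j+1} dim_k Q_{t,n}`. -/
theorem deformations_stmt13 {k A : Type*} [Field k]
    [CommRing A] [Algebra k A] [IsLocalRing A] [FiniteDimensional k A]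
    -- the residue field A/𝔪 is k
    (hres : Function.Bijective (algebraMap k (IsLocalRing.ResidueField A)))
    -- the socle soc(A) has k-dimension 1 (A is Gorenstein)
    (hsoc : Module.finrank k
      ↥((Submodule.torsionBySet A A
          ((IsLocalRing.maximalIdeal A : Ideal A) : Set A)).restrictScalars k) = 1)
    -- j is the socle degree of A
    (j : ℕ) (hj : IsLocalRing.maximalIdeal A ^ j ≠ ⊥)
    (hj' : IsLocalRing.maximalIdeal A ^ (j + 1) = ⊥) :
    -- (a)
    (∀ m : ℕ, iaQdim k (IsLocalRing.maximalIdeal A) m 0 = 0) ∧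
    (∀ m n : ℕ, (j : ℤ) + 1 < (m : ℤ) + n →
      iaQdim k (IsLocalRing.maximalIdeal A) m (n : ℤ) = 0) ∧
    -- (b)
    (∀ t : ℕ, j < t → hilbFn k (IsLocalRing.maximalIdeal A) t = 0) ∧
    -- (c)
    (∀ t : ℕ, t ≤ j →
      hilbFn k (IsLocalRing.maximalIdeal A) t =
        ∑ i ∈ Finset.range (j - t + 1), iaDelta k (IsLocalRing.maximalIdeal A) j i t) ∧
    (∀ t : ℕ, t ≤ j →
      hilbFn k (IsLocalRing.maximalIdeal A) t =
        ∑ n ∈ Finset.range (j + 2), iaQdim k (IsLocalRing.maximalIdeal A) t (n : ℤ)) := by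
  obtain ⟨hQzero, hQlarge, hHilb, hΔ, hQsum⟩ := deformations_stmt13_general (k := k) hj'
  exact ⟨hQzero, hQlarge, hHilb, hΔ, fun t _ => hQsum t⟩
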